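/- arXiv:2003.06865 — 3 statements merged into one kernel-verified Lean document; each statement's English description precedes it below -/
import Mathlib

section
/- Let X be a simplicial set and let T : Δ/X ⥤ 𝒜 be a covariant Gabriel–Zisman natural system with values in a complete abelian category 𝒜. Then there is an isomorphism of cochain complexes C^*(P_X, T) ≅ C^*_GZ(X, T), where C^*(P_X,T) is the alternating coface map cochain complex associated to the cosimplicial object Ran_{P_X}(T) : Δ ⥤ 𝒜 and C^*_GZ(X,T) is the Gabriel–Zisman cochain complex of X with coefficients in T. In particular H^n(P_X, T) ≅ H^n_GZ(X, T) for all n. -/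
/-!
STATEMENT 1: For a simplicial set `X` and a covariant Gabriel–Zisman natural system
`T : Δ/X ⥤ 𝒜` with values in a complete abelian category `𝒜`, there is an isomorphism of
cochain complexes `C^*(P_X, T) ≅ C^*_GZ(X, T)`, where `C^*(P_X, T)` is the alternating
coface map cochain complex of the cosimplicial object `Ran_{P_X}(T)` and `C^*_GZ(X, T)` is
the Gabriel–Zisman cochain complex.  In particular `H^n(P_X, T) ≅ H^n_GZ(X, T)` for all `n`.
-/

open CategoryTheory CategoryTheory.Limits Opposite Simplicial

universe v u

namespace GZ

variable {𝒜 : Type u} [Category.{v} 𝒜] [HasLimits 𝒜]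

/-- The simplex category `Δ/X` of a simplicial set `X`, realized as the opposite of
the category of elements of `X`. -/
abbrev SimplexCat (X : SSet.{v}) : Type v := X.Elementsᵒᵖ

/-- The object of `Δ/X` corresponding to a simplex `σ ∈ X_n`. -/
abbrev elt (X : SSet.{v}) {n : SimplexCategoryᵒᵖ} (σ : X.obj n) : SimplexCat X :=
  op (X.elementsMk n σ)

/-- The morphism of `Δ/X` from `X(θ)(σ)` to `σ` determined by `θ`. -/
abbrev eltHom (X : SSet.{v}) {n m : SimplexCategoryᵒᵖ} (θ : n ⟶ m) (σ : X.obj n) :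
    elt X (X.map θ σ) ⟶ elt X σ :=
  Quiver.Hom.op (CategoryOfElements.homMk (X.elementsMk n σ) (X.elementsMk m (X.map θ σ)) θ rfl)

/-- The projection functor `P_X : Δ/X ⥤ Δ`. -/
def proj (X : SSet.{v}) : SimplexCat X ⥤ SimplexCategory :=
  (CategoryOfElements.π X).leftOp

lemma rep_aux (X : SSet.{v}) (T : SimplexCat X ⥤ 𝒜) {u w : SimplexCategoryᵒᵖ}
    (g : u ⟶ w) (σ : X.obj u) (b : X.obj w) (h : X.map g σ = b) :
    Pi.π (fun τ : X.obj w => T.obj (elt X τ)) b ≫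
        T.map (Quiver.Hom.op (CategoryOfElements.homMk (X.elementsMk u σ) (X.elementsMk w b) g h)) =
      Pi.π (fun τ : X.obj w => T.obj (elt X τ)) (X.map g σ) ≫ T.map (eltHom X g σ) := by
  subst h; rfl

/-- The cosimplicial replacement `∏* T` of a Gabriel–Zisman natural system `T : Δ/X ⥤ 𝒜`. -/
@[simps!]
noncomputable def rep (X : SSet.{v}) (T : SimplexCat X ⥤ 𝒜) : CosimplicialObject 𝒜 where
  obj n := ∏ᶜ fun σ : X.obj (op n) => T.obj (elt X σ)
  map {n m} θ := Pi.lift fun σ : X.obj (op m) =>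
    Pi.π _ (X.map θ.op σ) ≫ T.map (eltHom X θ.op σ)
  map_id n := by
    ext σ
    simp only [limit.lift_π, Fan.mk_π_app, Category.id_comp, op_id]
    have h : X.map (𝟙 (op n)) σ = σ := by simp
    rw [← rep_aux X T (𝟙 (op n)) σ σ h]
    have e : (CategoryOfElements.homMk (X.elementsMk (op n) σ) (X.elementsMk (op n) σ)
        (𝟙 (op n)) h) = 𝟙 _ := CategoryOfElements.ext X _ _ rfl
    rw [e, op_id, T.map_id, Category.comp_id]
  map_comp {n m k} θ θ' := by
    ext σ
    simp only [Category.assoc, limit.lift_π, Fan.mk_π_app]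
    rw [← Category.assoc]
    simp only [limit.lift_π, Fan.mk_π_app, Category.assoc, ← T.map_comp]
    have h : X.map (θ ≫ θ').op σ = X.map θ.op (X.map θ'.op σ) := by
      rw [op_comp, FunctorToTypes.map_comp_apply]
    rw [← rep_aux X T (θ ≫ θ').op σ _ h]
    congr 1

end GZ

namespace GZ

variable {𝒜 : Type u} [Category.{v} 𝒜] [HasLimits 𝒜]

instance (priority := 100) smallLimits : HasLimitsOfSize.{0, v} 𝒜 :=
  hasLimitsOfSizeShrink.{0, v, v, v} 𝒜

/-- The Gabriel–Zisman cochain complex `C^*_GZ(X, T)`: its `n`-th term is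
`∏_{σ ∈ X_n} T(σ)` and its differential is the alternating sum of the coface-induced maps. -/
noncomputable def cochainComplexGZ [Preadditive 𝒜] (X : SSet.{v}) (T : SimplexCat X ⥤ 𝒜) :
    CochainComplex 𝒜 ℕ :=
  (AlgebraicTopology.alternatingCofaceMapComplex 𝒜).obj (rep X T)

end GZ

namespace GZ

variable {𝒜 : Type u} [Category.{v} 𝒜] [HasLimits 𝒜]

/-- Comparison map at level `n`. -/
noncomputable def compHom (X : SSet.{v}) (T : SimplexCat X ⥤ 𝒜) (n : SimplexCategory) :
    limit (StructuredArrow.proj n (proj X) ⋙ T) ⟶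
      ∏ᶜ fun σ : X.obj (op n) => T.obj (elt X σ) :=
  Pi.lift fun σ : X.obj (op n) =>
    limit.π (StructuredArrow.proj n (proj X) ⋙ T)
      (StructuredArrow.mk (S := n) (T := proj X) (Y := elt X σ) (𝟙 n))

lemma compHom_π (X : SSet.{v}) (T : SimplexCat X ⥤ 𝒜) (n : SimplexCategory)
    (σ : X.obj (op n)) :
    compHom X T n ≫ Pi.π (fun σ : X.obj (op n) => T.obj (elt X σ)) σ =
      limit.π (StructuredArrow.proj n (proj X) ⋙ T)
        (StructuredArrow.mk (S := n) (T := proj X) (Y := elt X σ) (𝟙 n)) :=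
  limit.lift_π _ _

/-- The components of the inverse. -/
noncomputable def invApp (X : SSet.{v}) (T : SimplexCat X ⥤ 𝒜) (n : SimplexCategory)
    (e : SimplexCat X) (f : n ⟶ (proj X).obj e) :
    (∏ᶜ fun σ : X.obj (op n) => T.obj (elt X σ)) ⟶ T.obj e :=
  Pi.π (fun σ : X.obj (op n) => T.obj (elt X σ)) (X.map f.op e.unop.2) ≫
    T.map (eltHom X f.op e.unop.2)

lemma invApp_comp (X : SSet.{v}) (T : SimplexCat X ⥤ 𝒜) (n : SimplexCategory)
    (e e' : SimplexCat X) (f : n ⟶ (proj X).obj e) (φ : e ⟶ e') (g : n ⟶ (proj X).obj e')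
    (w : f ≫ (proj X).map φ = g) :
    invApp X T n e' g = invApp X T n e f ≫ T.map φ := by
  have h : X.map g.op e'.unop.2 = X.map f.op e.unop.2 := by
    have h1 : X.map φ.unop.1 e'.unop.2 = e.unop.2 := φ.unop.2
    have h2 := FunctorToTypes.map_comp_apply X φ.unop.1 f.op e'.unop.2
    refine Eq.trans ?_ (h2.trans (congrArg _ h1))
    subst w
    rfl
  refine (rep_aux X T g.op e'.unop.2 _ h).symm.trans ?_
  refine Eq.trans ?_ (Category.assoc _ _ _).symm
  refine congrArg (fun z => _ ≫ z) ?_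
  refine Eq.trans ?_ (T.map_comp _ _)
  refine congrArg T.map ?_
  apply Quiver.Hom.unop_inj
  apply CategoryOfElements.ext
  exact congrArg Quiver.Hom.op w.symm

/-- The cone giving the inverse comparison map. -/
noncomputable def invCone (X : SSet.{v}) (T : SimplexCat X ⥤ 𝒜) (n : SimplexCategory) :
    Cone (StructuredArrow.proj n (proj X) ⋙ T) where
  pt := ∏ᶜ fun σ : X.obj (op n) => T.obj (elt X σ)
  π :=
    { app := fun f => invApp X T n f.right f.hom
      naturality := fun f g φ => (Category.id_comp _).trans
        (invApp_comp X T n _ _ f.hom φ.right g.hom (StructuredArrow.w φ)) }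

/-- The inverse comparison map. -/
noncomputable def compInv (X : SSet.{v}) (T : SimplexCat X ⥤ 𝒜) (n : SimplexCategory) :
    (∏ᶜ fun σ : X.obj (op n) => T.obj (elt X σ)) ⟶
      limit (StructuredArrow.proj n (proj X) ⋙ T) :=
  limit.lift _ (invCone X T n)

lemma compInv_π (X : SSet.{v}) (T : SimplexCat X ⥤ 𝒜) (n : SimplexCategory)
    (f : StructuredArrow n (proj X)) :
    compInv X T n ≫ limit.π (StructuredArrow.proj n (proj X) ⋙ T) f =
      invApp X T n f.right f.hom :=
  limit.lift_π _ _

/-- The comparison isomorphism. -/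
noncomputable def compIso (X : SSet.{v}) (T : SimplexCat X ⥤ 𝒜) (n : SimplexCategory) :
    limit (StructuredArrow.proj n (proj X) ⋙ T) ≅
      ∏ᶜ fun σ : X.obj (op n) => T.obj (elt X σ) where
  hom := compHom X T n
  inv := compInv X T n
  hom_inv_id := by
    apply limit.hom_ext
    intro f
    rw [Category.assoc, compInv_π]
    let φ : StructuredArrow.mk (S := n) (T := proj X)
        (Y := elt X (X.map f.hom.op f.right.unop.2)) (𝟙 n) ⟶ f :=
      StructuredArrow.homMk (eltHom X f.hom.op f.right.unop.2) (Category.id_comp _)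
    refine (Category.assoc _ _ _).symm.trans ?_
    refine (congrArg (fun z => z ≫ T.map _) (compHom_π X T n _)).trans ?_
    exact (limit.w (StructuredArrow.proj n (proj X) ⋙ T) φ).trans (Category.id_comp _).symm
  inv_hom_id := by
    apply Pi.hom_ext
    intro σ
    rw [Category.assoc, compHom_π]
    refine (compInv_π X T n _).trans (Eq.trans ?_ (Category.id_comp _).symm)
    have h : X.map (𝟙 (op n)) σ = σ := by simp
    refine (rep_aux X T (𝟙 (op n)) σ σ h).symm.trans ?_
    have e : (CategoryOfElements.homMk (X.elementsMk (op n) σ) (X.elementsMk (op n) σ)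
        (𝟙 (op n)) h) = 𝟙 _ := CategoryOfElements.ext X _ _ rfl
    rw [e, op_id, T.map_id, Category.comp_id]

lemma rep_map_π (X : SSet.{v}) (T : SimplexCat X ⥤ 𝒜) {n m : SimplexCategory} (θ : n ⟶ m)
    (σ : X.obj (op m)) :
    (rep X T).map θ ≫ Pi.π (fun σ : X.obj (op m) => T.obj (elt X σ)) σ =
      Pi.π (fun σ : X.obj (op n) => T.obj (elt X σ)) (X.map θ.op σ) ≫
        T.map (eltHom X θ.op σ) :=
  limit.lift_π (Fan.mk _ fun σ : X.obj (op m) =>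
    Pi.π (fun σ : X.obj (op n) => T.obj (elt X σ)) (X.map θ.op σ) ≫
      T.map (eltHom X θ.op σ)) ⟨σ⟩

/-- The right Kan extension is the cosimplicial replacement. -/
noncomputable def ranIso (X : SSet.{v}) (T : SimplexCat X ⥤ 𝒜) :
    (proj X).pointwiseRightKanExtension T ≅ rep X T :=
  NatIso.ofComponents (fun n => compIso X T n) (by
    intro n m θ
    apply Pi.hom_ext
    intro σ
    let φ : StructuredArrow.mk (S := n) (T := proj X)
        (Y := elt X (X.map θ.op σ)) (𝟙 n) ⟶
        (StructuredArrow.map θ).obj (StructuredArrow.mk (S := m) (T := proj X)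
          (Y := elt X σ) (𝟙 m)) :=
      StructuredArrow.homMk (eltHom X θ.op σ)
        ((Category.id_comp _).trans (Category.comp_id θ).symm)
    refine (Category.assoc _ _ _).trans (Eq.trans ?_ (Category.assoc _ _ _).symm)
    refine (congrArg (fun z => _ ≫ z) (compHom_π X T m σ)).trans ?_
    refine (limit.lift_π _ _).trans ?_
    refine (limit.w (StructuredArrow.proj n (proj X) ⋙ T) φ).symm.trans ?_
    refine Eq.trans ?_ (congrArg (fun z => compHom X T n ≫ z) (rep_map_π X T θ σ).symm)
    refine Eq.trans ?_ (Category.assoc _ _ _)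
    exact congrArg (fun z => z ≫ T.map (eltHom X θ.op σ)) (compHom_π X T n _).symm)

end GZ

open GZ in
theorem stmt_1 {𝒜 : Type u} [Category.{v} 𝒜] [Abelian 𝒜] [HasLimits 𝒜]
    (X : SSet.{v}) (T : SimplexCat X ⥤ 𝒜) :
    Nonempty ((AlgebraicTopology.alternatingCofaceMapComplex 𝒜).obj
        ((proj X).pointwiseRightKanExtension T) ≅ cochainComplexGZ X T) ∧
    ∀ n : ℕ,
      Nonempty ((((AlgebraicTopology.alternatingCofaceMapComplex 𝒜).obj
          ((proj X).pointwiseRightKanExtension T)).homology n) ≅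
        (cochainComplexGZ X T).homology n) := by
  exact ⟨⟨(AlgebraicTopology.alternatingCofaceMapComplex 𝒜).mapIso (ranIso X T)⟩, fun n =>
    ⟨(HomologicalComplex.homologyFunctor 𝒜 _ n).mapIso
      ((AlgebraicTopology.alternatingCofaceMapComplex 𝒜).mapIso (ranIso X T))⟩⟩
end

section
/- Let X be a simplicial set and let T : Δ/X ⥤ 𝒜 be a covariant Gabriel–Zisman natural system with values in a complete abelian category 𝒜 in which products are exact and such that the functor category Fun(Δ/X, 𝒜) has enough injectives (e.g. 𝒜 the category of modules over a ring). Then for every n ≥ 0 the n-th Gabriel–Zisman cohomology of X with coefficients in T is isomorphic to the n-th right derived functor of the limit functor applied to T: H^n_GZ(X, T) ≅ lim^n_{Δ/X} T, i.e. H^n_GZ(X,T) ≅ ((lim : Fun(Δ/X,𝒜) ⥤ 𝒜).rightDerived n)(T). -/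
/-!
STATEMENT 2: For a simplicial set `X` and a covariant Gabriel–Zisman natural system
`T : Δ/X ⥤ 𝒜` with values in a complete abelian category `𝒜` with exact products (AB4*)
such that `Fun(Δ/X, 𝒜)` has enough injectives, the `n`-th Gabriel–Zisman cohomology of `X`
with coefficients in `T` is the `n`-th right derived functor of the limit functor applied
to `T`: `H^n_GZ(X, T) ≅ lim^n_{Δ/X} T`.
-/

open CategoryTheory CategoryTheory.Limits Opposite Simplicial

universe v u

instance limAdditive {J : Type*} [Category J] {𝒜 : Type u} [Category.{v} 𝒜]
    [Limits.HasLimitsOfShape J 𝒜] [Preadditive 𝒜] :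
    (Limits.lim (J := J) (C := 𝒜)).Additive where

namespace GZGen
variable {C D : Type*} [Category C] [Category D] [Abelian C] [Abelian D]

lemma cokernel_iso_H1 (F : C ⥤ D) (K : C ⥤ CochainComplex D ℕ)
    [K.PreservesZeroMorphisms]
    (hK : ∀ S : ShortComplex C, S.ShortExact → (S.map K).ShortExact)
    (e : F ≅ K ⋙ HomologicalComplex.homologyFunctor D _ 0)
    (hI : ∀ (I : C) [Injective I] (n : ℕ), IsZero ((K.obj I).homology (n + 1)))
    (S : ShortComplex C) (hS : S.ShortExact) [Injective S.X₂] :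
    Nonempty (cokernel (F.map S.g) ≅ (K.obj S.X₁).homology 1) := by
  have h := hK S hS
  have hx := h.homology_exact₃ 0 1 (by simp)
  have : Epi (h.δ 0 1 (by simp)) := h.epi_δ 0 1 (by simp) (hI S.X₂ 0)
  have : Epi (ShortComplex.mk _ _ (h.comp_δ 0 1 (by simp))).g := this
  refine ⟨cokernel.mapIso _ _ (e.app S.X₂) (e.app S.X₃) ?_ ≪≫
    (cokernelIsCokernel _).coconePointUniqueUpToIso hx.gIsCokernel⟩
  exact e.hom.naturality S.g

/-- The short complex of cosyzygies. -/
noncomputable def syz (I : CochainComplex C ℕ) (k : ℕ) : ShortComplex C :=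
  ShortComplex.mk (I.iCycles k) (I.toCycles k (k + 1)) (by
    rw [← cancel_mono (I.iCycles (k + 1))]; simp)

lemma syz_aux (I : CochainComplex C ℕ) (k : ℕ) {A : C} (x : A ⟶ I.X k)
    (hx : x ≫ I.toCycles k (k + 1) = 0) : ∃ y : A ⟶ I.cycles k, x = y ≫ I.iCycles k := by
  have hx' : x ≫ I.d k (k + 1) = 0 := by
    rw [← I.toCycles_i k (k + 1), ← Category.assoc, hx, zero_comp]
  exact ⟨I.liftCycles x (k + 1) (by simp) hx', by simp⟩

lemma syz_shortExact (I : CochainComplex C ℕ) (k : ℕ) (h : I.ExactAt (k + 1)) :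
    (syz I k).ShortExact where
  mono_f := by dsimp [syz]; infer_instance
  epi_g := by
    dsimp [syz]
    refine Preadditive.epi_of_isZero_cokernel' _
      (I.homologyIsCokernel k (k + 1) (by simp)) ?_
    exact (HomologicalComplex.exactAt_iff_isZero_homology _ _).1 h
  exact := by
    rw [ShortComplex.exact_iff_exact_up_to_refinements]
    intro A x hx
    obtain ⟨y, hy⟩ := syz_aux I k x hx
    exact ⟨A, 𝟙 A, inferInstance, y, (Category.id_comp _).trans hy⟩

lemma homology_iso_cokernel (F : C ⥤ D) [F.Additive] [PreservesFiniteLimits F]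
    (I : CochainComplex C ℕ) (k : ℕ) :
    Nonempty (((F.mapHomologicalComplex _).obj I).homology (k + 1) ≅
      cokernel (F.map (I.toCycles k (k + 1)))) := by
  let J := (F.mapHomologicalComplex (ComplexShape.up ℕ)).obj I
  have l1 := KernelFork.mapIsLimit _ (I.cyclesIsKernel (k + 1) (k + 2) (by simp)) F
  have l2 := J.cyclesIsKernel (k + 1) (k + 2) (by simp)
  let φ : F.obj (I.cycles (k + 1)) ≅ J.cycles (k + 1) := l1.conePointUniqueUpToIso l2
  have hφ : φ.hom ≫ J.iCycles (k + 1) = F.map (I.iCycles (k + 1)) :=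
    l1.conePointUniqueUpToIso_hom_comp l2 WalkingParallelPair.zero
  have w : F.map (I.toCycles k (k + 1)) ≫ φ.hom = 𝟙 _ ≫ J.toCycles k (k + 1) := by
    apply (cancel_mono (J.iCycles (k + 1))).1
    refine (Category.assoc _ _ _).trans ?_
    refine (congrArg (fun t => F.map (I.toCycles k (k + 1)) ≫ t) hφ).trans ?_
    refine (F.map_comp _ _).symm.trans ?_
    refine (congrArg F.map (I.toCycles_i k (k + 1))).trans ?_
    rw [Category.id_comp]
    exact (J.toCycles_i k (k + 1)).symm
  exact ⟨((J.homologyIsCokernel k (k + 1) (by simp)).coconePointUniqueUpToIso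
    (cokernelIsCokernel _)) ≪≫ (cokernel.mapIso _ _ (Iso.refl _) φ w).symm⟩

lemma shift (K : C ⥤ CochainComplex D ℕ)
    [K.PreservesZeroMorphisms]
    (hK : ∀ S : ShortComplex C, S.ShortExact → (S.map K).ShortExact)
    (hI : ∀ (I : C) [Injective I] (n : ℕ), IsZero ((K.obj I).homology (n + 1)))
    (I : CochainComplex C ℕ) (hinj : ∀ k, Injective (I.X k))
    (hex : ∀ k, I.ExactAt (k + 1)) (q : ℕ) : ∀ p : ℕ,
    Nonempty ((K.obj (I.cycles q)).homology (p + 1) ≅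
      (K.obj (I.cycles 0)).homology (p + 1 + q)) := by
  induction q with
  | zero => intro p; exact ⟨Iso.refl _⟩
  | succ q ih =>
    intro p
    have h := hK _ (syz_shortExact I q (hex q))
    have := hinj q
    obtain ⟨i⟩ := ih (p + 1)
    refine ⟨h.δIso (p + 1) (p + 2) (by simp) (hI (I.X q) p) (hI (I.X q) (p + 1)) ≪≫ i ≪≫
      eqToIso ?_⟩
    congr 1
    omega

theorem main (F : C ⥤ D) [F.Additive] [PreservesFiniteLimits F] [EnoughInjectives C]
    (K : C ⥤ CochainComplex D ℕ) [K.PreservesZeroMorphisms]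
    (hK : ∀ S : ShortComplex C, S.ShortExact → (S.map K).ShortExact)
    (e : F ≅ K ⋙ HomologicalComplex.homologyFunctor D _ 0)
    (hI : ∀ (I : C) [Injective I] (n : ℕ), IsZero ((K.obj I).homology (n + 1)))
    (T : C) (n : ℕ) : Nonempty ((K.obj T).homology n ≅ (F.rightDerived n).obj T) := by
  cases n with
  | zero => exact ⟨(e.app T).symm ≪≫ (F.rightDerivedZeroIsoSelf.app T).symm⟩
  | succ n =>
    let R := InjectiveResolution.of T
    let I := R.cocomplex
    have hinj : ∀ k, Injective (I.X k) := R.injective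
    have hex : ∀ k, I.ExactAt (k + 1) := R.cocomplex_exactAt_succ
    let z : I.cycles 0 ≅ T :=
      (I.cyclesIsKernel 0 1 (by simp)).conePointUniqueUpToIso R.isLimitKernelFork
    obtain ⟨a⟩ := shift K hK hI I hinj hex n 0
    have : Injective (syz I n).X₂ := hinj n
    obtain ⟨b⟩ := cokernel_iso_H1 F K hK e hI _ (syz_shortExact I n (hex n))
    obtain ⟨c⟩ := homology_iso_cokernel F I n
    have hn : 0 + 1 + n = n + 1 := by omega
    rw [hn] at a
    exact ⟨(HomologicalComplex.homologyFunctor D _ (n + 1)).mapIso (K.mapIso z.symm) ≪≫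
      a.symm ≪≫ b.symm ≪≫ c.symm ≪≫ (R.isoRightDerivedObj F (n + 1)).symm⟩

end GZGen
namespace GZ
section
variable {𝒜 : Type u} [Category.{v} 𝒜] [HasLimits 𝒜] (X : SSet.{v})

/-- `rep` as a plain functor. -/
noncomputable def R (T : SimplexCat X ⥤ 𝒜) : SimplexCategory ⥤ 𝒜 := rep X T

/-- The projections of `rep`. -/
noncomputable def rπ (T : SimplexCat X ⥤ 𝒜) (n : SimplexCategory) (σ : X.obj (op n)) :
    (R X T).obj n ⟶ T.obj (elt X σ) :=
  Pi.π (fun σ : X.obj (op n) => T.obj (elt X σ)) σ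

/-- Lifts to `rep`. -/
noncomputable def rlift (T : SimplexCat X ⥤ 𝒜) (n : SimplexCategory) {A : 𝒜}
    (a : ∀ σ : X.obj (op n), A ⟶ T.obj (elt X σ)) : A ⟶ (R X T).obj n :=
  Pi.lift a

lemma rlift_rπ (T : SimplexCat X ⥤ 𝒜) (n : SimplexCategory) {A : 𝒜}
    (a : ∀ σ : X.obj (op n), A ⟶ T.obj (elt X σ)) (σ : X.obj (op n)) :
    rlift X T n a ≫ rπ X T n σ = a σ := Pi.lift_π a σ

lemma rlift_rπ_assoc (T : SimplexCat X ⥤ 𝒜) (n : SimplexCategory) {A : 𝒜}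
    (a : ∀ σ : X.obj (op n), A ⟶ T.obj (elt X σ)) (σ : X.obj (op n)) {Z : 𝒜}
    (h : T.obj (elt X σ) ⟶ Z) :
    rlift X T n a ≫ rπ X T n σ ≫ h = a σ ≫ h := by
  rw [← Category.assoc, rlift_rπ]

lemma rext (T : SimplexCat X ⥤ 𝒜) (n : SimplexCategory) {A : 𝒜}
    {a b : A ⟶ (R X T).obj n} (h : ∀ σ, a ≫ rπ X T n σ = b ≫ rπ X T n σ) : a = b :=
  Pi.hom_ext _ _ h

lemma rep_map_rπ (T : SimplexCat X ⥤ 𝒜) {n m : SimplexCategory} (θ : n ⟶ m) (σ : X.obj (op m)) :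
    (R X T).map θ ≫ rπ X T m σ = rπ X T n (X.map θ.op σ) ≫ T.map (eltHom X θ.op σ) := by
  apply Pi.lift_π

lemma rep_map_rπ_assoc (T : SimplexCat X ⥤ 𝒜) {n m : SimplexCategory} (θ : n ⟶ m)
    (σ : X.obj (op m)) {Z : 𝒜} (h : T.obj (elt X σ) ⟶ Z) :
    (R X T).map θ ≫ rπ X T m σ ≫ h =
      rπ X T n (X.map θ.op σ) ≫ T.map (eltHom X θ.op σ) ≫ h := by
  rw [← Category.assoc, rep_map_rπ, Category.assoc]

lemma rπ_eq (T : SimplexCat X ⥤ 𝒜) {n m : SimplexCategory} (f : n ⟶ m) (σ : X.obj (op m))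
    (b : X.obj (op n)) (h : X.map f.op σ = b) :
    rπ X T n b ≫ T.map (Quiver.Hom.op
      (CategoryOfElements.homMk (X.elementsMk (op m) σ) (X.elementsMk (op n) b) f.op h)) =
      rπ X T n (X.map f.op σ) ≫ T.map (eltHom X f.op σ) :=
  rep_aux X T f.op σ b h

/-- The functor of pointwise evaluation. -/
noncomputable def evalD (n : SimplexCategory) :
    (SimplexCat X ⥤ 𝒜) ⥤ (Discrete (X.obj (op n)) ⥤ 𝒜) where
  obj T := Discrete.functor (fun σ : X.obj (op n) => T.obj (elt X σ))
  map f := Discrete.natTrans (fun σ => f.app (elt X σ.as))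

/-- `evalD` is a whiskering functor. -/
noncomputable def evalDIso (n : SimplexCategory) : evalD (𝒜 := 𝒜) X n ≅
    (Functor.whiskeringLeft _ _ 𝒜).obj (Discrete.functor (fun σ : X.obj (op n) => elt X σ)) :=
  NatIso.ofComponents (fun T => Discrete.natIso (fun σ => Iso.refl _)) (by
    intro T T' f
    ext σ
    simp [evalD])

/-- The maps induced on `rep`. -/
noncomputable def rmap {T T' : SimplexCat X ⥤ 𝒜} (f : T ⟶ T') (n : SimplexCategory) :
    (R X T).obj n ⟶ (R X T').obj n := (evalD X n ⋙ lim).map f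

lemma rmap_rπ {T T' : SimplexCat X ⥤ 𝒜} (f : T ⟶ T') (n : SimplexCategory) (σ : X.obj (op n)) :
    rmap X f n ≫ rπ X T' n σ = rπ X T n σ ≫ f.app (elt X σ) :=
  limMap_π _ _

lemma rmap_rπ_assoc {T T' : SimplexCat X ⥤ 𝒜} (f : T ⟶ T') (n : SimplexCategory)
    (σ : X.obj (op n)) {Z : 𝒜} (h : T'.obj (elt X σ) ⟶ Z) :
    rmap X f n ≫ rπ X T' n σ ≫ h = rπ X T n σ ≫ f.app (elt X σ) ≫ h := by
  rw [← Category.assoc, rmap_rπ, Category.assoc]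

lemma rmap_naturality {T T' : SimplexCat X ⥤ 𝒜} (f : T ⟶ T') {n m : SimplexCategory} (θ : n ⟶ m) :
    (R X T).map θ ≫ rmap X f m = rmap X f n ≫ (R X T').map θ := by
  apply rext
  intro σ
  rw [Category.assoc, Category.assoc, rmap_rπ, rep_map_rπ, rep_map_rπ_assoc, rmap_rπ_assoc,
    f.naturality]

/-- Functoriality of `rep`. -/
noncomputable def repFun : (SimplexCat X ⥤ 𝒜) ⥤ CosimplicialObject 𝒜 where
  obj T := rep X T
  map {T T'} f :=
    { app := fun n => rmap X f n
      naturality := fun n m θ => rmap_naturality X f θ }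
  map_id T := by
    apply NatTrans.ext
    funext n
    exact (evalD X n ⋙ lim).map_id T
  map_comp f g := by
    apply NatTrans.ext
    funext n
    exact (evalD X n ⋙ lim).map_comp f g

end
section
variable {𝒜 : Type u} [Category.{v} 𝒜] [HasLimits 𝒜] [Abelian 𝒜] (X : SSet.{v})

/-- The complex functor. -/
noncomputable def KF : (SimplexCat X ⥤ 𝒜) ⥤ CochainComplex 𝒜 ℕ :=
  repFun X ⋙ AlgebraicTopology.alternatingCofaceMapComplex 𝒜

lemma KF_map_f {T T' : SimplexCat X ⥤ 𝒜} (f : T ⟶ T') (n : ℕ) :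
    ((KF X).map f).f n = rmap X f ⦋n⦌ := rfl

/-- The differential. -/
noncomputable def rd (T : SimplexCat X ⥤ 𝒜) (n : ℕ) : (R X T).obj ⦋n⦌ ⟶ (R X T).obj ⦋n + 1⦌ :=
  ∑ i : Fin (n + 2), (-1 : ℤ) ^ (i : ℕ) • (R X T).map (SimplexCategory.δ i)

lemma KF_d (T : SimplexCat X ⥤ 𝒜) (n : ℕ) :
    ((KF X).obj T).d n (n + 1) = rd X T n := by
  exact CochainComplex.of_d (fun n => (rep X T).obj ⦋n⦌)
    (AlgebraicTopology.AlternatingCofaceMapComplex.objD (rep X T)) n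

lemma rmap_zero (n : SimplexCategory) (T T' : SimplexCat X ⥤ 𝒜) :
    rmap X (0 : T ⟶ T') n = 0 := by
  apply rext
  intro σ
  rw [rmap_rπ, zero_comp, zero_app, comp_zero]

instance KF_pz : (KF (𝒜 := 𝒜) X).PreservesZeroMorphisms where
  map_zero T T' := by
    apply HomologicalComplex.hom_ext
    intro n
    exact rmap_zero X ⦋n⦌ T T'

instance [AB4Star 𝒜] (n : SimplexCategory) :
    PreservesFiniteColimits (evalD (𝒜 := 𝒜) X n ⋙ lim) := by
  have : PreservesFiniteColimits (evalD (𝒜 := 𝒜) X n) :=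
    preservesFiniteColimits_of_natIso (evalDIso X n).symm
  infer_instance

instance (n : SimplexCategory) :
    PreservesFiniteLimits (evalD (𝒜 := 𝒜) X n ⋙ lim) := by
  have : PreservesFiniteLimits (evalD (𝒜 := 𝒜) X n) :=
    preservesFiniteLimits_of_natIso (evalDIso X n).symm
  infer_instance

lemma KF_shortExact [AB4Star 𝒜] (S : ShortComplex (SimplexCat X ⥤ 𝒜)) (hS : S.ShortExact) :
    (S.map (KF X)).ShortExact := by
  apply HomologicalComplex.shortExact_of_degreewise_shortExact
  intro n
  have : (evalD (𝒜 := 𝒜) X ⦋n⦌ ⋙ lim).PreservesZeroMorphisms :=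
    { map_zero := rmap_zero X ⦋n⦌ }
  exact hS.map_of_exact (evalD (𝒜 := 𝒜) X ⦋n⦌ ⋙ lim)
end
end GZ
namespace GZ
section
open SSet.Augmented.StandardSimplex (shift)

lemma δ_zero_shift {n : ℕ} {m : SimplexCategory} (θ : ⦋n⦌ ⟶ m) :
    SimplexCategory.δ 0 ≫ shift θ = θ := by
  apply SimplexCategory.Hom.ext
  ext i : 2
  rfl

lemma δ_succ_shift {n : ℕ} {m : SimplexCategory} (i : Fin (n + 2)) (θ : ⦋n + 1⦌ ⟶ m) :
    SimplexCategory.δ i.succ ≫ shift θ = shift (SimplexCategory.δ i ≫ θ) := by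
  apply SimplexCategory.Hom.ext
  ext j : 2
  dsimp [SimplexCategory.δ]
  cases j using Fin.cases
  · rfl
  · simp
    rfl

lemma δ_one_shift {m : SimplexCategory} (θ : ⦋0⦌ ⟶ m) :
    SimplexCategory.δ 1 ≫ shift θ = SimplexCategory.const ⦋0⦌ m 0 := by
  apply SimplexCategory.Hom.ext_zero_left
  rfl

variable {𝒜 : Type u} [Category.{v} 𝒜] [HasLimits 𝒜] (X : SSet.{v})

/-- The canonical projection. -/
noncomputable def rho (T : SimplexCat X ⥤ 𝒜) (d : SimplexCat X) :
    (R X T).obj ((proj X).obj d) ⟶ T.obj d :=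
  rπ X T ((proj X).obj d) d.unop.2

lemma rho_naturality (T : SimplexCat X ⥤ 𝒜) {d c : SimplexCat X} (f : d ⟶ c) :
    (R X T).map ((proj X).map f) ≫ rho X T c = rho X T d ≫ T.map f :=
  (rep_map_rπ X T ((proj X).map f) c.unop.2).trans
    (rπ_eq X T ((proj X).map f) c.unop.2 d.unop.2 f.unop.2).symm

lemma rho_naturality_assoc (T : SimplexCat X ⥤ 𝒜) {d c : SimplexCat X} (f : d ⟶ c) {Z : 𝒜}
    (h : T.obj c ⟶ Z) :
    (R X T).map ((proj X).map f) ≫ rho X T c ≫ h = rho X T d ≫ T.map f ≫ h := by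
  rw [← Category.assoc, rho_naturality, Category.assoc]

/-- The cofree functor. -/
noncomputable def cof (T : SimplexCat X ⥤ 𝒜) : SimplexCat X ⥤ 𝒜 where
  obj d := ∏ᶜ fun p : (Σ c, (d ⟶ c)) => T.obj p.1
  map {d d'} g := Pi.lift fun p : (Σ c, (d' ⟶ c)) =>
    Pi.π (fun p : (Σ c, (d ⟶ c)) => T.obj p.1) ⟨p.1, g ≫ p.2⟩
  map_id d := by
    apply Pi.hom_ext
    intro p
    rw [Pi.lift_π, Category.id_comp, Category.id_comp]
  map_comp f g := by
    apply Pi.hom_ext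
    intro p
    rw [Pi.lift_π, Category.assoc, Category.assoc, Pi.lift_π, Pi.lift_π]

/-- Projections. -/
noncomputable def cπ (T : SimplexCat X ⥤ 𝒜) {d c : SimplexCat X} (f : d ⟶ c) :
    (cof X T).obj d ⟶ T.obj c :=
  Pi.π (fun p : (Σ c, (d ⟶ c)) => T.obj p.1) ⟨c, f⟩

/-- Lifts. -/
noncomputable def clift (T : SimplexCat X ⥤ 𝒜) (d : SimplexCat X) {A : 𝒜}
    (a : ∀ c, (d ⟶ c) → (A ⟶ T.obj c)) : A ⟶ (cof X T).obj d :=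
  Pi.lift fun p : (Σ c, (d ⟶ c)) => a p.1 p.2

lemma clift_cπ (T : SimplexCat X ⥤ 𝒜) (d : SimplexCat X) {A : 𝒜}
    (a : ∀ c, (d ⟶ c) → (A ⟶ T.obj c)) {c : SimplexCat X} (f : d ⟶ c) :
    clift X T d a ≫ cπ X T f = a c f := Pi.lift_π _ _

lemma cext (T : SimplexCat X ⥤ 𝒜) (d : SimplexCat X) {A : 𝒜}
    {a b : A ⟶ (cof X T).obj d} (h : ∀ c (f : d ⟶ c), a ≫ cπ X T f = b ≫ cπ X T f) : a = b :=
  Pi.hom_ext _ _ (fun p => h p.1 p.2)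

lemma cof_map_cπ (T : SimplexCat X ⥤ 𝒜) {d d' c : SimplexCat X} (g : d ⟶ d') (f : d' ⟶ c) :
    (cof X T).map g ≫ cπ X T f = cπ X T (g ≫ f) := Pi.lift_π _ _

/-- The unit. -/
noncomputable def cunit (T : SimplexCat X ⥤ 𝒜) : T ⟶ cof X T where
  app d := clift X T d (fun _ f => T.map f)
  naturality d d' g := by
    apply cext
    intro c f
    rw [Category.assoc, Category.assoc, cof_map_cπ, clift_cπ, clift_cπ, T.map_comp]

instance (T : SimplexCat X ⥤ 𝒜) : Mono (cunit X T) := by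
  have (d : SimplexCat X) : Mono ((cunit X T).app d) := by
    have h : (cunit X T).app d ≫ cπ X T (𝟙 d) = 𝟙 _ := by
      rw [← T.map_id]
      exact clift_cπ _ _ _ _ _
    have : Mono ((cunit X T).app d ≫ cπ X T (𝟙 d)) := by rw [h]; infer_instance
    exact mono_of_mono _ (cπ X T (𝟙 d))
  exact NatTrans.mono_of_mono_app _

/-- Diagonal projections. -/
noncomputable def diagP (T : SimplexCat X ⥤ 𝒜) (c : SimplexCat X) :
    (R X (cof X T)).obj ((proj X).obj c) ⟶ T.obj c :=
  rho X (cof X T) c ≫ cπ X T (𝟙 c)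

lemma rho_cπ (T : SimplexCat X ⥤ 𝒜) {d c : SimplexCat X} (f : d ⟶ c) :
    rho X (cof X T) d ≫ cπ X T f = (R X (cof X T)).map ((proj X).map f) ≫ diagP X T c := by
  rw [diagP, rho_naturality_assoc, cof_map_cπ, Category.comp_id]

/-- The extra codegeneracy. -/
noncomputable def hty (T : SimplexCat X ⥤ 𝒜) (n : ℕ) :
    (R X (cof X T)).obj ⦋n + 1⦌ ⟶ (R X (cof X T)).obj ⦋n⦌ :=
  rlift X (cof X T) ⦋n⦌ fun σ => clift X T (elt X σ) fun c f =>
    (R X (cof X T)).map (shift (n := n) ((proj X).map f)) ≫ diagP X T c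

lemma rep_map_diagP (T : SimplexCat X ⥤ 𝒜) {n : ℕ} (c : SimplexCat X) (θ : ⦋n⦌ ⟶ (proj X).obj c) :
    (R X (cof X T)).map θ ≫ diagP X T c =
      rπ X (cof X T) ⦋n⦌ (X.map θ.op c.unop.2) ≫ cπ X T (eltHom X θ.op c.unop.2) :=
  (rho_cπ X T (eltHom X θ.op c.unop.2)).symm

lemma hty_map_diagP (T : SimplexCat X ⥤ 𝒜) {n : ℕ} (c : SimplexCat X)
    (θ : ⦋n⦌ ⟶ (proj X).obj c) :
    hty X T n ≫ (R X (cof X T)).map θ ≫ diagP X T c =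
      (R X (cof X T)).map (shift θ) ≫ diagP X T c := by
  refine (congrArg (hty X T n ≫ ·) (rep_map_diagP X T c θ)).trans ?_
  refine (rlift_rπ_assoc X (cof X T) ⦋n⦌ _ _ _).trans ?_
  exact clift_cπ X T _ _ _

lemma rep_cof_ext (T : SimplexCat X ⥤ 𝒜) {n : ℕ} {A : 𝒜} {a b : A ⟶ (R X (cof X T)).obj ⦋n⦌}
    (h : ∀ c (θ : ⦋n⦌ ⟶ (proj X).obj c), a ≫ (R X (cof X T)).map θ ≫ diagP X T c =
      b ≫ (R X (cof X T)).map θ ≫ diagP X T c) : a = b := by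
  apply rext
  intro σ
  apply cext
  intro c f
  have e := rho_cπ X T f
  have := h c ((proj X).map f)
  refine (Category.assoc _ _ _).trans (Eq.trans ?_ (Category.assoc _ _ _).symm)
  exact (congrArg (a ≫ ·) e).trans (this.trans (congrArg (b ≫ ·) e).symm)

lemma δ_zero_hty (T : SimplexCat X ⥤ 𝒜) (n : ℕ) :
    (R X (cof X T)).map (SimplexCategory.δ 0) ≫ hty X T n = 𝟙 _ := by
  apply rep_cof_ext
  intro c θ
  rw [Category.assoc, hty_map_diagP, ← Functor.map_comp_assoc, δ_zero_shift, Category.id_comp]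

lemma δ_succ_hty (T : SimplexCat X ⥤ 𝒜) (n : ℕ) (i : Fin (n + 2)) :
    (R X (cof X T)).map (SimplexCategory.δ i.succ) ≫ hty X T (n + 1) =
      hty X T n ≫ (R X (cof X T)).map (SimplexCategory.δ i) := by
  apply rep_cof_ext
  intro c θ
  rw [Category.assoc, hty_map_diagP, ← Functor.map_comp_assoc, δ_succ_shift, Category.assoc,
    ← Functor.map_comp_assoc, hty_map_diagP]

end
section
variable {𝒜 : Type u} [Category.{v} 𝒜] [HasLimits 𝒜] [Abelian 𝒜] (X : SSet.{v})
open SSet.Augmented.StandardSimplex (shift)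

lemma rd_hty (T : SimplexCat X ⥤ 𝒜) (n : ℕ) :
    rd X (cof X T) (n + 1) ≫ hty X T (n + 1) = 𝟙 _ - hty X T n ≫ rd X (cof X T) n := by
  rw [rd, Fin.sum_univ_succ, Preadditive.add_comp, Preadditive.zsmul_comp, δ_zero_hty,
    rd, Preadditive.sum_comp, Preadditive.comp_sum, sub_eq_add_neg, ← Finset.sum_neg_distrib]
  congr 1
  · simp
  · apply Finset.sum_congr rfl
    intro i _
    rw [Preadditive.zsmul_comp, δ_succ_hty, Preadditive.comp_zsmul, ← neg_smul]
    congr 1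
    rw [Fin.val_succ, pow_succ]
    ring

lemma cof_exact (T : SimplexCat X ⥤ 𝒜) (n : ℕ) :
    IsZero (((KF X).obj (cof X T)).homology (n + 1)) := by
  rw [← HomologicalComplex.exactAt_iff_isZero_homology,
    HomologicalComplex.exactAt_iff' _ n (n + 1) (n + 2) (by simp) (by simp),
    ShortComplex.exact_iff_exact_up_to_refinements]
  intro A x hx
  have aux : ∀ (x : A ⟶ (R X (cof X T)).obj ⦋n + 1⦌) (hx : x ≫ rd X (cof X T) (n + 1) = 0),
      x = (x ≫ hty X T n) ≫ rd X (cof X T) n := by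
    intro x hx
    have : x ≫ (rd X (cof X T) (n + 1) ≫ hty X T (n + 1)) =
        x ≫ (𝟙 _ - hty X T n ≫ rd X (cof X T) n) := congrArg (fun t => x ≫ t) (rd_hty X T n)
    rw [← Category.assoc, hx, zero_comp, Preadditive.comp_sub, Category.comp_id] at this
    rw [Category.assoc]
    exact (sub_eq_zero.1 this.symm)
  have h1 := aux x ((congrArg (fun t => CategoryStruct.comp (obj := 𝒜) x t)
    (KF_d X (cof X T) (n + 1)).symm).trans hx)
  refine ⟨A, 𝟙 A, inferInstance, x ≫ hty X T n, (Category.id_comp _).trans (h1.trans ?_)⟩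
  exact congrArg (fun t => CategoryStruct.comp (obj := 𝒜) (x ≫ hty X T n) t)
    (KF_d X (cof X T) n).symm

lemma inj_exact (I : SimplexCat X ⥤ 𝒜) [Injective I] (n : ℕ) :
    IsZero (((KF X).obj I).homology (n + 1)) := by
  let G := KF (𝒜 := 𝒜) X ⋙ HomologicalComplex.homologyFunctor 𝒜 _ (n + 1)
  have h : cunit X I ≫ Injective.factorThru (𝟙 I) (cunit X I) = 𝟙 I :=
    Injective.comp_factorThru _ _
  have h0 : IsZero (G.obj (cof X I)) := cof_exact X I n
  change IsZero (G.obj I)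
  rw [IsZero.iff_id_eq_zero, ← G.map_id, ← h, G.map_comp, h0.eq_of_tgt (G.map (cunit X I)) 0,
    zero_comp]

/-- The augmentation. -/
noncomputable def aug (T : SimplexCat X ⥤ 𝒜) : limit T ⟶ (R X T).obj ⦋0⦌ :=
  rlift X T ⦋0⦌ fun σ => limit.π T (elt X σ)

lemma aug_map (T : SimplexCat X ⥤ 𝒜) (d : SimplexCat X) (θ : ⦋0⦌ ⟶ (proj X).obj d) :
    aug X T ≫ (R X T).map θ ≫ rho X T d = limit.π T d := by
  have := rep_map_rπ X T θ d.unop.2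
  refine (congrArg (aug X T ≫ ·) this).trans ?_
  refine (rlift_rπ_assoc X T ⦋0⦌ _ _ _).trans ?_
  exact limit.w T (eltHom X θ.op d.unop.2)

lemma aug_rd (T : SimplexCat X ⥤ 𝒜) : aug X T ≫ rd X T 0 = 0 := by
  apply rext
  intro σ
  have h0 := aug_map X T (elt X σ) (SimplexCategory.δ (n := 0) 0)
  have h1 := aug_map X T (elt X σ) (SimplexCategory.δ (n := 0) 1)
  have h2 : aug X T ≫ (R X T).map (SimplexCategory.δ (n := 0) 0) ≫ rπ X T ⦋1⦌ σ =
    aug X T ≫ (R X T).map (SimplexCategory.δ (n := 0) 1) ≫ rπ X T ⦋1⦌ σ := h0.trans h1.symm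
  rw [rd, Fin.sum_univ_two, Fin.val_zero, pow_zero, one_smul, Fin.val_one, pow_one, neg_smul,
    one_smul, Preadditive.comp_add, Preadditive.comp_neg, Preadditive.add_comp,
    Preadditive.neg_comp, Category.assoc, Category.assoc, h2, zero_comp, add_neg_cancel]

lemma aug_naturality {T T' : SimplexCat X ⥤ 𝒜} (f : T ⟶ T') :
    lim.map f ≫ aug X T' = aug X T ≫ rmap X f ⦋0⦌ := by
  apply rext
  intro σ
  rw [Category.assoc, Category.assoc, rmap_rπ, aug, rlift_rπ, aug, rlift_rπ_assoc]
  exact limMap_π _ _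

instance aug_mono (T : SimplexCat X ⥤ 𝒜) : Mono (aug X T) := ⟨by
  intro A a b h
  apply limit.hom_ext
  intro d
  rw [← aug_map X T d (SimplexCategory.const _ _ 0), ← Category.assoc, h, Category.assoc]⟩

lemma aug_lift (T : SimplexCat X ⥤ 𝒜) {A : 𝒜} (z : A ⟶ (R X T).obj ⦋0⦌)
    (hz : z ≫ rd X T 0 = 0) : ∃ y : A ⟶ limit T, y ≫ aug X T = z := by
  have h01 : z ≫ (R X T).map (SimplexCategory.δ (n := 0) 0) =
      z ≫ (R X T).map (SimplexCategory.δ (n := 0) 1) := by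
    rw [rd, Fin.sum_univ_two, Fin.val_zero, pow_zero, one_smul, Fin.val_one, pow_one, neg_smul,
      one_smul, Preadditive.comp_add, Preadditive.comp_neg, add_neg_eq_zero] at hz
    exact hz
  have hc : ∀ {m : SimplexCategory} (θ : ⦋0⦌ ⟶ m), z ≫ (R X T).map θ =
      z ≫ (R X T).map (SimplexCategory.const ⦋0⦌ m 0) := by
    intro m θ
    rw [← δ_one_shift θ, Functor.map_comp, ← Category.assoc, ← h01, Category.assoc,
      ← Functor.map_comp, δ_zero_shift]
  let s : Cone T :=
    { pt := A
      π :=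
        { app := fun d => z ≫ (R X T).map (SimplexCategory.const ⦋0⦌ ((proj X).obj d) 0) ≫
            rho X T d
          naturality := fun d c f => by
            dsimp only [Functor.const_obj_obj, Functor.const_obj_map]
            rw [Category.id_comp, Category.assoc, Category.assoc, ← rho_naturality,
              ← Functor.map_comp_assoc, ← Category.assoc, ← Category.assoc, hc (_ ≫ _)] } }
  refine ⟨limit.lift T s, ?_⟩
  apply rext
  intro σ
  rw [Category.assoc, aug, rlift_rπ, limit.lift_π]
  change z ≫ (R X T).map (SimplexCategory.const ⦋0⦌ ⦋0⦌ 0) ≫ rπ X T ⦋0⦌ σ = _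
  rw [SimplexCategory.const_eq_id, (R X T).map_id, Category.id_comp]

/-- The map to cycles. -/
noncomputable def augC (T : SimplexCat X ⥤ 𝒜) : limit T ⟶ ((KF X).obj T).cycles 0 :=
  ((KF X).obj T).liftCycles (aug X T) 1 (by simp) (by rw [KF_d]; exact aug_rd X T)

lemma augC_i (T : SimplexCat X ⥤ 𝒜) : augC X T ≫ ((KF X).obj T).iCycles 0 = aug X T := by
  exact HomologicalComplex.liftCycles_i _ _ _ _ _

lemma augC_i_assoc (T : SimplexCat X ⥤ 𝒜) {Z : 𝒜} (h : ((KF X).obj T).X 0 ⟶ Z) :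
    augC X T ≫ ((KF X).obj T).iCycles 0 ≫ h =
      CategoryStruct.comp (Y := ((KF X).obj T).X 0) (aug X T) h := by
  rw [← Category.assoc, augC_i]

instance (T : SimplexCat X ⥤ 𝒜) : IsIso (augC X T) := by
  have : Mono (augC X T) := by
    have : Mono (augC X T ≫ ((KF X).obj T).iCycles 0) := by rw [augC_i]; exact aug_mono X T
    exact mono_of_mono _ (((KF X).obj T).iCycles 0)
  obtain ⟨y, hy⟩ := aug_lift X T (((KF X).obj T).iCycles 0) (by
    rw [← KF_d]; exact ((KF X).obj T).iCycles_d 0 1)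
  have hy' : y ≫ augC X T = 𝟙 _ := by
    rw [← cancel_mono (((KF X).obj T).iCycles 0), Category.assoc, augC_i, Category.id_comp]
    exact hy
  have : Epi (augC X T) := by
    have : Epi (y ≫ augC X T) := by rw [hy']; infer_instance
    exact epi_of_epi y _
  exact isIso_of_mono_of_epi _

/-- The identification of `H⁰`. -/
noncomputable def H0 : (lim : (SimplexCat X ⥤ 𝒜) ⥤ 𝒜) ≅
    KF X ⋙ HomologicalComplex.homologyFunctor 𝒜 _ 0 :=
  NatIso.ofComponents (fun T => asIso (augC X T) ≪≫ ((KF X).obj T).isoHomologyπ₀) (by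
    intro T T' f
    have : lim.map f ≫ augC X T' =
        augC X T ≫ HomologicalComplex.cyclesMap ((KF X).map f) 0 := by
      rw [← cancel_mono (((KF X).obj T').iCycles 0), Category.assoc, Category.assoc, augC_i,
        HomologicalComplex.cyclesMap_i, augC_i_assoc]
      exact aug_naturality X f
    change lim.map f ≫ augC X T' ≫ ((KF X).obj T').homologyπ 0 =
      (augC X T ≫ ((KF X).obj T).homologyπ 0) ≫ HomologicalComplex.homologyMap ((KF X).map f) 0
    rw [← Category.assoc, this, Category.assoc, Category.assoc,
      HomologicalComplex.homologyπ_naturality])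

end
end GZ

open GZ in
theorem stmt_2 {𝒜 : Type u} [Category.{v} 𝒜] [Abelian 𝒜] [HasLimits 𝒜] [AB4Star 𝒜]
    (X : SSet.{v}) [EnoughInjectives (SimplexCat X ⥤ 𝒜)]
    (T : SimplexCat X ⥤ 𝒜) (n : ℕ) :
    Nonempty ((cochainComplexGZ X T).homology n ≅
      ((Limits.lim (J := SimplexCat X) (C := 𝒜)).rightDerived n).obj T) := by
  have : PreservesFiniteLimits (lim : (SimplexCat X ⥤ 𝒜) ⥤ 𝒜) := inferInstance
  exact GZGen.main lim (KF X) (KF_shortExact X) (H0 X) (fun I _ n => inj_exact X I n) T n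
end

section
/- Let X be a simplicial set and let T : (Δ/X)ᵒᵖ ⥤ 𝒜 be a functor into a cocomplete category 𝒜. Then for every n ≥ 0 the value at [n] of the (pointwise) left Kan extension Lan_{P_X^{op}}(T) : Δᵒᵖ ⥤ 𝒜 of T along the opposite projection P_X^{op} : (Δ/X)ᵒᵖ ⥤ Δᵒᵖ is isomorphic to the coproduct ⊕_{σ ∈ X_n} T(σ), naturally in T. -/
/-!
STATEMENT 3: For a simplicial set `X` and a functor `T : (Δ/X)ᵒᵖ ⥤ 𝒜` into a cocomplete
category `𝒜`, the value at `[n]` of the (pointwise) left Kan extension of `T` along the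
opposite projection `P_Xᵒᵖ : (Δ/X)ᵒᵖ ⥤ Δᵒᵖ` is isomorphic to the coproduct
`⊕_{σ ∈ X_n} T(σ)`, naturally in `T`.
-/

open CategoryTheory CategoryTheory.Limits Opposite

universe v u

/-- The simplex category `Δ/X` of a simplicial set `X`, realized as the opposite of
the category of elements of `X`. -/
abbrev SimplexCat (X : SSet.{v}) : Type v := X.Elementsᵒᵖ

/-- The object of `Δ/X` corresponding to a simplex `σ ∈ X_n`. -/
abbrev elt (X : SSet.{v}) {n : SimplexCategoryᵒᵖ} (σ : X.obj n) : SimplexCat X :=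
  op (X.elementsMk n σ)

/-- The projection functor `P_X : Δ/X ⥤ Δ`, `([n], σ) ↦ [n]`. -/
def proj (X : SSet.{v}) : SimplexCat X ⥤ SimplexCategory :=
  (CategoryOfElements.π X).leftOp

instance (priority := 100) smallColimits {𝒜 : Type u} [Category.{v} 𝒜] [HasColimits 𝒜] :
    HasColimitsOfSize.{0, v} 𝒜 := hasColimitsOfSizeShrink.{0, v, v, v} 𝒜

noncomputable section Aux

variable {𝒜 : Type u} [Category.{v} 𝒜] [HasColimits 𝒜] (X : SSet.{v}) (n : SimplexCategory)

/-- The underlying map of an object over `op n`. -/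
def auxHom (a : CostructuredArrow (proj X).op (op n)) : a.left.unop.unop.1 ⟶ op n := a.hom

/-- The simplex to which an object over `op n` is sent. -/
def auxElt (a : CostructuredArrow (proj X).op (op n)) : X.obj (op n) :=
  X.map (auxHom X n a) a.left.unop.unop.2

/-- The canonical morphism to the component. -/
def auxLift (a : CostructuredArrow (proj X).op (op n)) :
    a.left ⟶ op (elt X (auxElt X n a)) :=
  (CategoryOfElements.homMk a.left.unop.unop (X.elementsMk (op n) (auxElt X n a))
    (auxHom X n a) rfl).op.op

theorem auxLift_map (a : CostructuredArrow (proj X).op (op n)) :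
    (proj X).op.map (auxLift X n a) = a.hom := rfl

theorem aux_eq {𝒜 : Type u} [Category.{v} 𝒜] {T : (SimplexCat X)ᵒᵖ ⥤ 𝒜} {x : (SimplexCat X)ᵒᵖ} {A : 𝒜}
    (s : ∀ σ : X.obj (op n), T.obj (op (elt X σ)) ⟶ A)
    {σ σ' : X.obj (op n)} (h : σ = σ') (g : x ⟶ op (elt X σ)) (g' : x ⟶ op (elt X σ'))
    (hg : (g.unop.unop).val = (g'.unop.unop).val) :
    T.map g ≫ s σ = T.map g' ≫ s σ' := by
  subst h
  have : g = g' := Quiver.Hom.unop_inj (Quiver.Hom.unop_inj (Subtype.ext hg))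
  rw [this]

theorem aux_w {a b : CostructuredArrow (proj X).op (op n)} (g : a ⟶ b) :
    g.left.unop.unop.val ≫ auxHom X n b = auxHom X n a := CostructuredArrow.w g

theorem auxElt_eq {a b : CostructuredArrow (proj X).op (op n)} (g : a ⟶ b) :
    auxElt X n b = auxElt X n a := by
  have h : X.map g.left.unop.unop.val a.left.unop.unop.2 = b.left.unop.unop.2 :=
    g.left.unop.unop.property
  unfold auxElt
  rw [← aux_w X n g]
  refine (congrArg (X.map (auxHom X n b)) h).symm.trans ?_
  rw [Functor.map_comp]
  rfl

/-- The cocone given by a family of maps. -/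
def auxCocone (T : (SimplexCat X)ᵒᵖ ⥤ 𝒜) {A : 𝒜}
    (s : ∀ σ : X.obj (op n), T.obj (op (elt X σ)) ⟶ A) :
    Cocone (CostructuredArrow.proj (proj X).op (op n) ⋙ T) where
  pt := A
  ι :=
    { app := fun a => T.map (auxLift X n a) ≫ s (auxElt X n a)
      naturality := fun a b g => by
        change T.map g.left ≫ T.map (auxLift X n b) ≫ s (auxElt X n b) =
          (T.map (auxLift X n a) ≫ s (auxElt X n a)) ≫ 𝟙 A
        rw [Category.comp_id, ← Category.assoc, ← T.map_comp]
        exact aux_eq X n s (auxElt_eq X n g) _ _ (aux_w X n g) }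

/-- The colimit property of the left Kan extension. -/
def auxColim (T : (SimplexCat X)ᵒᵖ ⥤ 𝒜) :
    (Functor.LeftExtension.mk _
      ((proj X).op.lanUnit.app T)).IsPointwiseLeftKanExtensionAt (op n) :=
  (proj X).op.isPointwiseLeftKanExtensionLeftKanExtensionUnit T (op n)

/-- The component inclusion. -/
def auxInc (T : (SimplexCat X)ᵒᵖ ⥤ 𝒜) (σ : X.obj (op n)) :
    T.obj (op (elt X σ)) ⟶ ((proj X).op.lan.obj T).obj (op n) :=
  ((proj X).op.lanUnit.app T).app (op (elt X σ))

/-- The descent map. -/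
def auxDesc (T : (SimplexCat X)ᵒᵖ ⥤ 𝒜) {A : 𝒜}
    (s : ∀ σ : X.obj (op n), T.obj (op (elt X σ)) ⟶ A) :
    ((proj X).op.lan.obj T).obj (op n) ⟶ A :=
  IsColimit.desc (auxColim X n T) (auxCocone X n T s)

theorem auxInc_desc (T : (SimplexCat X)ᵒᵖ ⥤ 𝒜) {A : 𝒜}
    (s : ∀ σ : X.obj (op n), T.obj (op (elt X σ)) ⟶ A) (σ : X.obj (op n)) :
    auxInc X n T σ ≫ auxDesc X n T s = s σ := by
  let a : CostructuredArrow (proj X).op (op n) :=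
    CostructuredArrow.mk (Y := op (elt X σ)) (𝟙 (op n))
  have h : (auxInc X n T σ ≫
      ((proj X).op.lan.obj T).map (𝟙 (op n))) ≫ auxDesc X n T s =
      T.map (auxLift X n a) ≫ s (auxElt X n a) :=
    IsColimit.fac (auxColim X n T) (auxCocone X n T s) a
  have e : auxElt X n a = σ := by
    change X.map (𝟙 (op n)) σ = σ
    simp
  have h2 : T.map (auxLift X n a) ≫ s (auxElt X n a) = T.map (𝟙 (op (elt X σ))) ≫ s σ :=
    aux_eq X n s e _ _ rfl
  rw [h2, T.map_id, Category.id_comp, CategoryTheory.Functor.map_id, Category.comp_id] at h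
  exact h

theorem aux_hom_ext (T : (SimplexCat X)ᵒᵖ ⥤ 𝒜) {A : 𝒜}
    (f g : ((proj X).op.lan.obj T).obj (op n) ⟶ A)
    (h : ∀ σ, auxInc X n T σ ≫ f = auxInc X n T σ ≫ g) : f = g := by
  refine IsColimit.hom_ext (auxColim X n T) fun a => ?_
  have key : ((proj X).op.lanUnit.app T).app a.left ≫
      ((proj X).op.lan.obj T).map a.hom = T.map (auxLift X n a) ≫ auxInc X n T (auxElt X n a) :=
    (((proj X).op.lanUnit.app T).naturality (auxLift X n a)).symm
  change (((proj X).op.lanUnit.app T).app a.left ≫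
      ((proj X).op.lan.obj T).map a.hom) ≫ f = (((proj X).op.lanUnit.app T).app a.left ≫
      ((proj X).op.lan.obj T).map a.hom) ≫ g
  rw [key, Category.assoc, Category.assoc, h]

/-- The isomorphism. -/
def auxIso (T : (SimplexCat X)ᵒᵖ ⥤ 𝒜) :
    ((proj X).op.lan.obj T).obj (op n) ≅ ∐ fun σ : X.obj (op n) => T.obj (op (elt X σ)) where
  hom := auxDesc X n T (Limits.Sigma.ι (fun σ : X.obj (op n) => T.obj (op (elt X σ))))
  inv := Limits.Sigma.desc (auxInc X n T)
  hom_inv_id := by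
    apply aux_hom_ext
    intro σ
    rw [← Category.assoc, auxInc_desc, Category.comp_id]
    simp
  inv_hom_id := by
    apply Limits.Sigma.hom_ext
    intro σ
    rw [← Category.assoc, Limits.Sigma.ι_desc, auxInc_desc, Category.comp_id]

end Aux

theorem stmt_3 {𝒜 : Type u} [Category.{v} 𝒜] [HasColimits 𝒜] (X : SSet.{v})
    (n : SimplexCategory) :
    ∃ e : ∀ T : (SimplexCat X)ᵒᵖ ⥤ 𝒜,
        ((proj X).op.lan.obj T).obj (op n) ≅ ∐ fun σ : X.obj (op n) => T.obj (op (elt X σ)),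
      ∀ (T T' : (SimplexCat X)ᵒᵖ ⥤ 𝒜) (τ : T ⟶ T'),
        ((proj X).op.lan.map τ).app (op n) ≫ (e T').hom =
          (e T).hom ≫ Limits.Sigma.map fun σ : X.obj (op n) => τ.app (op (elt X σ)) := by
  refine ⟨auxIso X n, fun T T' τ => ?_⟩
  apply aux_hom_ext
  intro σ
  have h : auxInc X n T σ ≫ ((proj X).op.lan.map τ).app (op n) =
      τ.app (op (elt X σ)) ≫ auxInc X n T' σ :=
    (NatTrans.congr_app ((proj X).op.lanUnit.naturality τ) (op (elt X σ))).symm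
  rw [← Category.assoc, h, Category.assoc, ← Category.assoc (auxInc X n T σ)]
  simp only [auxIso]
  rw [auxInc_desc, auxInc_desc]
  simp
end
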